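/- Fix n ≥ 2 and let H = ⟨γ^(2^(n-2))⟩ ⊆ C_{2^n} be the subgroup of order 4. Set W_n = ⊕_{ℓ=0}^{2^(n-2)−1} (M_{1−5^ℓ} ⊕ M_{1+5^ℓ}). Then the restriction of W_n to H is isomorphic, as a real representation of H, to the direct sum of 2^(2n-3) copies of the trivial one-dimensional representation of H and 2^(2n-3) copies of the one-dimensional representation of H on which the generator γ^(2^(n-2)) acts by −1. -/

import Mathlib

open Polynomial

/-- `An n = ℝ[x]/(x^(2^(n-1)) + 1)`. -/
noncomputable abbrev An (n : ℕ) : Type :=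
  ℝ[X] ⧸ Ideal.span {(X : ℝ[X]) ^ 2 ^ (n - 1) + 1}

/-- The image of `x` in `An n`, as a unit (its inverse is `-x^(2^(n-1)-1)`);
it has multiplicative order `2^n`.  For `c : ℤ`, the representation `M c` of the
cyclic group `C_{2^n} = ⟨γ⟩` is `An n` with `γ` acting by multiplication by `(xu n)^c`. -/
noncomputable def xu (n : ℕ) : (An n)ˣ :=
  Units.mkOfMulEqOne (Ideal.Quotient.mk _ X)
    (-(Ideal.Quotient.mk (Ideal.span {(X : ℝ[X]) ^ 2 ^ (n - 1) + 1}) X) ^ (2 ^ (n - 1) - 1))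
    (by
      have h0 : (Ideal.Quotient.mk (Ideal.span {(X : ℝ[X]) ^ 2 ^ (n - 1) + 1})
          ((X : ℝ[X]) ^ 2 ^ (n - 1) + 1)) = 0 :=
        Ideal.Quotient.eq_zero_iff_mem.mpr (Ideal.subset_span (Set.mem_singleton _))
      have hx : (Ideal.Quotient.mk (Ideal.span {(X : ℝ[X]) ^ 2 ^ (n - 1) + 1}) X) ^ 2 ^ (n - 1)
          = -1 := by
        rw [map_add, map_pow, map_one] at h0
        linear_combination h0
      have h1 : 1 ≤ 2 ^ (n - 1) := Nat.one_le_two_pow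
      calc Ideal.Quotient.mk _ X *
            (-(Ideal.Quotient.mk (Ideal.span {(X : ℝ[X]) ^ 2 ^ (n - 1) + 1}) X) ^ (2 ^ (n - 1) - 1))
          = -((Ideal.Quotient.mk (Ideal.span {(X : ℝ[X]) ^ 2 ^ (n - 1) + 1}) X) ^ (2 ^ (n - 1) - 1 + 1)) := by
            ring
        _ = 1 := by rw [Nat.sub_add_cancel h1, hx]; ring)

lemma finrank_An (n : ℕ) : Module.finrank ℝ (An n) = 2 ^ (n - 1) := by
  rw [finrank_quotient_span_eq_natDegree]
  simpa using natDegree_X_pow_add_C (R := ℝ) (n := 2 ^ (n - 1)) (r := 1)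

instance finite_An (n : ℕ) : Module.Finite ℝ (An n) :=
  Module.finite_of_finrank_pos (by rw [finrank_An]; positivity)

lemma xu_pow_two_pow (n : ℕ) : xu n ^ 2 ^ (n - 1) = -1 := by
  ext
  have h : Ideal.Quotient.mk (Ideal.span {(X : ℝ[X]) ^ 2 ^ (n - 1) + 1})
      ((X : ℝ[X]) ^ 2 ^ (n - 1) + 1) = 0 :=
    Ideal.Quotient.eq_zero_iff_mem.mpr (Ideal.subset_span (Set.mem_singleton _))
  rw [map_add, map_pow, map_one] at h
  exact eq_neg_of_add_eq_zero_left h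

lemma Units.neg_one_zpow_two_mul {R : Type*} [CommRing R] (k : ℤ) :
    (-1 : Rˣ) ^ (2 * k) = 1 := by
  rw [zpow_mul, zpow_ofNat, neg_one_sq, one_zpow]

lemma Units.neg_one_zpow_two_mul_add_one {R : Type*} [CommRing R] (k : ℤ) :
    (-1 : Rˣ) ^ (2 * k + 1) = -1 := by
  rw [zpow_add_one, Units.neg_one_zpow_two_mul, one_mul]

lemma xu_zpow_two_mul (n : ℕ) (hn : 2 ≤ n) (k : ℤ) :
    xu n ^ (2 * k * 2 ^ (n - 2)) = (-1) ^ k := by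
  have h : (2 * k * 2 ^ (n - 2) : ℤ) = ((2 ^ (n - 1) : ℕ) : ℤ) * k := by
    obtain ⟨m, rfl⟩ := Nat.exists_eq_add_of_le' hn
    simp only [Nat.add_sub_cancel, Nat.add_succ_sub_one]
    push_cast
    ring
  rw [h, zpow_mul, zpow_natCast, xu_pow_two_pow]

lemma four_dvd_five_pow_sub_one (l : ℕ) : (4 : ℤ) ∣ 5 ^ l - 1 := by
  simpa using sub_dvd_pow_sub_pow (5 : ℤ) 1 l

lemma xu_zpow_one_sub (n : ℕ) (hn : 2 ≤ n) (l : ℕ) :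
    xu n ^ (((1 : ℤ) - 5 ^ l) * 2 ^ (n - 2)) = 1 := by
  obtain ⟨k, hk⟩ := four_dvd_five_pow_sub_one l
  rw [show (1 : ℤ) - 5 ^ l = 2 * (2 * -k) by linarith, xu_zpow_two_mul n hn]
  exact Units.neg_one_zpow_two_mul _

lemma xu_zpow_one_add (n : ℕ) (hn : 2 ≤ n) (l : ℕ) :
    xu n ^ (((1 : ℤ) + 5 ^ l) * 2 ^ (n - 2)) = -1 := by
  obtain ⟨k, hk⟩ := four_dvd_five_pow_sub_one l
  rw [show (1 : ℤ) + 5 ^ l = 2 * (2 * k + 1) by linarith, xu_zpow_two_mul n hn]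
  exact Units.neg_one_zpow_two_mul_add_one _

lemma finrank_fun_An (n : ℕ) (hn : 2 ≤ n) :
    Module.finrank ℝ (Fin (2 ^ (n - 2)) → An n) =
      Module.finrank ℝ (Fin (2 ^ (2 * n - 3)) → ℝ) := by
  rw [Module.finrank_pi_fintype]
  simp only [finrank_An, Finset.sum_const, Finset.card_univ, Fintype.card_fin, smul_eq_mul,
    Module.finrank_fin_fun]
  rw [← pow_add]
  congr 1
  omega

/-- Corollary 2.18 (case `m = 1`): let `H = ⟨γ^(2^(n-2))⟩ ⊆ C_{2^n}` be the subgroup of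
order `4` and `W_n = ⊕_{ℓ=0}^{2^(n-2)-1} (M_{1-5^ℓ} ⊕ M_{1+5^ℓ})`.  The restriction of
`W_n` to `H` is isomorphic to `2^(2n-3)` copies of the trivial one-dimensional real
representation of `H` plus `2^(2n-3)` copies of the one-dimensional representation on
which the generator `γ^(2^(n-2))` acts by `-1`: there is an `ℝ`-linear equivalence
intertwining the action of `γ^(2^(n-2))` (which acts on `M_c` by multiplication by
`x^(c·2^(n-2))`) with the action `(w₁, w₂) ↦ (w₁, -w₂)`. -/
theorem stmt_13 (n : ℕ) (hn : 2 ≤ n) :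
    ∃ T : ((Fin (2 ^ (n - 2)) → An n) × (Fin (2 ^ (n - 2)) → An n))
        ≃ₗ[ℝ] ((Fin (2 ^ (2 * n - 3)) → ℝ) × (Fin (2 ^ (2 * n - 3)) → ℝ)),
      ∀ v : (Fin (2 ^ (n - 2)) → An n) × (Fin (2 ^ (n - 2)) → An n),
        T ⟨fun ℓ => ((xu n ^ (((1 : ℤ) - 5 ^ (ℓ : ℕ)) * 2 ^ (n - 2)) : (An n)ˣ) : An n) * v.1 ℓ,
           fun ℓ => ((xu n ^ (((1 : ℤ) + 5 ^ (ℓ : ℕ)) * 2 ^ (n - 2)) : (An n)ˣ) : An n) * v.2 ℓ⟩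
          = ((T v).1, fun i => -((T v).2 i)) := by
  let e := LinearEquiv.ofFinrankEq _ _ (finrank_fun_An n hn)
  refine ⟨e.prodCongr e, fun v => ?_⟩
  simp only [xu_zpow_one_sub n hn, xu_zpow_one_add n hn, Units.val_one, Units.val_neg, one_mul,
    neg_one_mul]
  exact Prod.ext rfl (map_neg e v.2)
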